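/- Fix a nonnegative integer z. For each n ≥ 1, let q_n denote the probability, for a uniformly random n-element subset S of {1,…,2n} (so m = n), that A_0(S) + B_0(S) ≥ z. Then q_n converges to (z+2)/2^{z+1} as n → ∞. -/

import Mathlib

open Finset Filter

/-- The `j`-th smallest element (1-indexed) of a finite set of naturals. -/
def nthSmallest (T : Finset ℕ) (j : ℕ) : ℕ :=
  (T.sort (· ≤ ·)).getD (j - 1) 0

/-- Exceedance statistic: for an `n`-element subset `S` of `{1,…,m+n}` (the ranks of the
`Y`-sample), the number of elements of `S` greater than `X_{(m-s)}`, the `(m-s)`-th smallest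
element of the complement of `S`. -/
def Aexc (m n s : ℕ) (S : Finset ℕ) : ℕ :=
  (S.filter fun y => nthSmallest (Finset.Icc 1 (m + n) \ S) (m - s) < y).card

/-- Precedence statistic: the number of elements of the complement of `S` smaller than
`Y_{(r+1)}`, the `(r+1)`-th smallest element of `S`. -/
def Bprec (m n r : ℕ) (S : Finset ℕ) : ℕ :=
  ((Finset.Icc 1 (m + n) \ S).filter fun x => x < nthSmallest S (r + 1)).card

/-!
The event `j ≤ A₀ ∧ i ≤ B₀` says that the `j` top ranks belong to the `Y`-sample and the `i` bottom
ranks to the `X`-sample. Its probability is therefore a quotient of binomial coefficients, equal to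
`m(m-1)⋯(m-i+1) · n(n-1)⋯(n-j+1)` over `(m+n)(m+n-1)⋯(m+n-i-j+1)`. If `m / (m + n) → p`, this tends
to `p ^ i * (1 - p) ^ j`: in the limit `A₀` and `B₀` are independent geometric variables. Splitting
`z ≤ A₀ + B₀` according to the value of `min A₀ z` gives the tail of their sum.
-/

section OrderStatistics

lemma nthSmallest_one {T : Finset ℕ} (hT : T.Nonempty) : nthSmallest T 1 = T.min' hT := by
  rw [nthSmallest, List.getD_eq_getElem _ _ (by simpa using hT), min'_eq_sorted_zero]

lemma nthSmallest_card {T : Finset ℕ} (hT : T.Nonempty) : nthSmallest T #T = T.max' hT := by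
  have hlast : #T - 1 < #T := Nat.sub_lt hT.card_pos Nat.one_pos
  rw [nthSmallest, List.getD_eq_getElem _ _ (by simpa using hlast), max'_eq_sorted_last]
  simp only [length_sort]

variable {m n : ℕ} {S : Finset ℕ}

lemma card_Icc_sdiff (hS : S ∈ powersetCard n (Icc 1 (m + n))) : #(Icc 1 (m + n) \ S) = m := by
  obtain ⟨hsub, hcard⟩ := mem_powersetCard.mp hS
  rw [card_sdiff_of_subset hsub, hcard, Nat.card_Icc]
  omega

lemma Aexc_zero_eq_sub_max' (hS : S ∈ powersetCard n (Icc 1 (m + n)))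
    (hne : (Icc 1 (m + n) \ S).Nonempty) :
    Aexc m n 0 S = m + n - (Icc 1 (m + n) \ S).max' hne := by
  have hsub := (mem_powersetCard.mp hS).1
  have hmax : nthSmallest (Icc 1 (m + n) \ S) m = (Icc 1 (m + n) \ S).max' hne := by
    rw [← nthSmallest_card hne, card_Icc_sdiff hS]
  rw [Aexc, Nat.sub_zero, hmax, ← Nat.card_Ioc]
  congr 1
  ext y
  simp only [mem_filter, mem_Ioc]
  constructor
  · rintro ⟨hy, hlt⟩
    exact ⟨hlt, (mem_Icc.mp (hsub hy)).2⟩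
  · rintro ⟨hlt, hy⟩
    refine ⟨by_contra fun hyS => hlt.not_ge (le_max' _ _ ?_), hlt⟩
    exact Finset.mem_sdiff.mpr ⟨mem_Icc.mpr ⟨by omega, hy⟩, hyS⟩

lemma Bprec_zero_eq_min'_sub_one (hsub : S ⊆ Icc 1 (m + n)) (hne : S.Nonempty) :
    Bprec m n 0 S = S.min' hne - 1 := by
  rw [Bprec, Nat.zero_add, nthSmallest_one hne, ← Nat.card_Ico]
  congr 1
  ext x
  simp only [mem_filter, Finset.mem_sdiff, mem_Icc, mem_Ico]
  have hmin := (mem_Icc.mp (hsub (S.min'_mem hne))).2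
  constructor
  · rintro ⟨⟨⟨hx, -⟩, -⟩, hlt⟩
    exact ⟨hx, hlt⟩
  · rintro ⟨hx, hlt⟩
    exact ⟨⟨⟨hx, by omega⟩, fun hxS => hlt.not_ge (min'_le _ _ hxS)⟩, hlt⟩

lemma le_Aexc_zero_iff (hm : 0 < m) (hS : S ∈ powersetCard n (Icc 1 (m + n))) {j : ℕ}
    (hj : j ≤ m + n) : j ≤ Aexc m n 0 S ↔ Ioc (m + n - j) (m + n) ⊆ S := by
  have hne : (Icc 1 (m + n) \ S).Nonempty := card_pos.mp (by rwa [card_Icc_sdiff hS])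
  have hmax : (Icc 1 (m + n) \ S).max' hne ≤ m + n :=
    (mem_Icc.mp (Finset.mem_sdiff.mp (max'_mem _ hne)).1).2
  calc j ≤ Aexc m n 0 S
      ↔ (Icc 1 (m + n) \ S).max' hne ≤ m + n - j := by
        rw [Aexc_zero_eq_sub_max' hS hne]; omega
    _ ↔ Ioc (m + n - j) (m + n) ⊆ S := by
        simp only [max'_le_iff, subset_iff, Finset.mem_sdiff, mem_Icc, mem_Ioc]
        exact forall_congr' fun x => by grind

lemma le_Bprec_zero_iff (hn : 0 < n) (hS : S ∈ powersetCard n (Icc 1 (m + n))) {i : ℕ} :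
    i ≤ Bprec m n 0 S ↔ S ⊆ Ioc i (m + n) := by
  obtain ⟨hsub, hcard⟩ := mem_powersetCard.mp hS
  have hne : S.Nonempty := card_pos.mp (by rwa [hcard])
  have hmin : 1 ≤ S.min' hne := (mem_Icc.mp (hsub (min'_mem _ hne))).1
  calc i ≤ Bprec m n 0 S
      ↔ i + 1 ≤ S.min' hne := by rw [Bprec_zero_eq_min'_sub_one hsub hne]; omega
    _ ↔ S ⊆ Ioc i (m + n) := by
        simp only [le_min'_iff, subset_iff, mem_Ioc]
        exact forall₂_congr fun x hx => by have := mem_Icc.mp (hsub hx); omega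

lemma card_filter_joint_tail {i j : ℕ} (hm : 0 < m) (hn : 0 < n) (hi : i ≤ m) (hj : j ≤ n) :
    #{S ∈ powersetCard n (Icc 1 (m + n)) | j ≤ Aexc m n 0 S ∧ i ≤ Bprec m n 0 S}
      = (m - i + (n - j)).choose (n - j) := by
  have hset : {S ∈ powersetCard n (Icc 1 (m + n)) | j ≤ Aexc m n 0 S ∧ i ≤ Bprec m n 0 S}
      = {S ∈ powersetCard n (Ioc i (m + n)) | Ioc (m + n - j) (m + n) ⊆ S} := by
    have hIoc : Ioc i (m + n) ⊆ Icc 1 (m + n) := fun x => by simp only [mem_Ioc, mem_Icc]; omega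
    ext S
    simp only [mem_filter]
    constructor
    · rintro ⟨hS, hA, hB⟩
      exact ⟨mem_powersetCard.mpr ⟨(le_Bprec_zero_iff hn hS).mp hB, (mem_powersetCard.mp hS).2⟩,
        (le_Aexc_zero_iff hm hS (by omega)).mp hA⟩
    · rintro ⟨hS, htop⟩
      have hS' := powersetCard_mono hIoc hS
      exact ⟨hS', (le_Aexc_zero_iff hm hS' (by omega)).mpr htop,
        (le_Bprec_zero_iff hn hS').mpr (mem_powersetCard.mp hS).1⟩
  have htop : #(Ioc (m + n - j) (m + n)) = j := by rw [Nat.card_Ioc]; omega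
  rw [hset, card_filter_powersetCard_subset _ _ _ (Ioc_subset_Ioc_left (by omega)) (by omega),
    htop, Nat.card_Ioc]
  congr 1
  omega

end OrderStatistics

section BinomialQuotient

lemma choose_sub_mul_descFactorial {m n i j : ℕ} (hi : i ≤ m) (hj : j ≤ n) :
    (m - i + (n - j)).choose (n - j) * (m + n).descFactorial (i + j)
      = m.descFactorial i * n.descFactorial j * (m + n).choose n := by
  have hpos : 0 < (m - i).factorial * (n - j).factorial := by positivity
  refine Nat.eq_of_mul_eq_mul_right hpos ?_
  have hsub : m + n - (i + j) = m - i + (n - j) := by omega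
  calc (m - i + (n - j)).choose (n - j) * (m + n).descFactorial (i + j)
        * ((m - i).factorial * (n - j).factorial)
      = (m - i + (n - j)).factorial * (m + n).descFactorial (i + j) := by
        rw [← Nat.add_choose_mul_factorial_mul_factorial (m - i) (n - j)]
        ring
    _ = (m + n).factorial := by
        rw [← hsub, Nat.factorial_mul_descFactorial (by omega)]
    _ = (m + n).choose n * m.factorial * n.factorial := by
        rw [← Nat.add_choose_mul_factorial_mul_factorial m n]
    _ = m.descFactorial i * n.descFactorial j * (m + n).choose n
        * ((m - i).factorial * (n - j).factorial) := by
        rw [← Nat.factorial_mul_descFactorial hi, ← Nat.factorial_mul_descFactorial hj]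
        ring

variable {ι : Type*} {l : Filter ι} {m n : ι → ℕ} {p : ℝ}

lemma tendsto_right_div_add (hm : Tendsto m l atTop)
    (hp : Tendsto (fun k => (m k : ℝ) / (m k + n k)) l (nhds p)) :
    Tendsto (fun k => (n k : ℝ) / (m k + n k)) l (nhds (1 - p)) := by
  refine (hp.const_sub 1).congr' ?_
  filter_upwards [hm.eventually_gt_atTop 0] with k hk
  have hne : (m k + n k : ℝ) ≠ 0 := by positivity
  rw [one_sub_div hne, add_sub_cancel_left]

lemma tendsto_descFactorial_mul_div (hm : Tendsto m l atTop) (hn : Tendsto n l atTop)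
    (hp : Tendsto (fun k => (m k : ℝ) / (m k + n k)) l (nhds p)) (i j : ℕ) :
    Tendsto (fun k => ((m k).descFactorial i * (n k).descFactorial j : ℝ)
      / (m k + n k).descFactorial (i + j)) l (nhds (p ^ i * (1 - p) ^ j)) := by
  have hpow : Tendsto (fun k => (m k : ℝ) ^ i * (n k : ℝ) ^ j / ((m k + n k : ℕ) : ℝ) ^ (i + j)) l
      (nhds (p ^ i * (1 - p) ^ j)) := by
    refine ((hp.pow i).mul ((tendsto_right_div_add hm hp).pow j)).congr fun k => ?_
    rw [div_pow, div_pow, div_mul_div_comm, ← pow_add, Nat.cast_add]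
  have hadd : Tendsto (fun k => m k + n k) l atTop := hm.atTop_add_nonneg fun k => (n k).zero_le
  exact ((((isEquivalent_descFactorial i).comp_tendsto hm).mul
    ((isEquivalent_descFactorial j).comp_tendsto hn)).div
    ((isEquivalent_descFactorial (i + j)).comp_tendsto hadd)).symm.tendsto_nhds hpow

end BinomialQuotient

section TailDecomposition

variable {α : Type*} (s : Finset α) (A B : α → ℕ)

lemma card_filter_add_tail_eq_sum (z : ℕ) :
    #{x ∈ s | z ≤ A x + B x}
      = ∑ j ∈ range z, #{x ∈ s | A x = j ∧ z - j ≤ B x} + #{x ∈ s | z ≤ A x} := by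
  have hmaps : ∀ x ∈ ({x ∈ s | z ≤ A x + B x} : Finset α), min (A x) z ∈ range (z + 1) :=
    fun x _ => mem_range.mpr (by omega)
  rw [card_eq_sum_card_fiberwise hmaps, sum_range_succ]
  simp only [filter_filter]
  congr 1
  · refine sum_congr rfl fun j hj => congrArg card (filter_congr fun x _ => ?_)
    have := mem_range.mp hj
    omega
  · exact congrArg card (filter_congr fun x _ => by omega)

lemma card_filter_eq_add_card_filter_succ_le (P : α → Prop) [DecidablePred P] (j : ℕ) :
    #{x ∈ s | A x = j ∧ P x} + #{x ∈ s | j + 1 ≤ A x ∧ P x} = #{x ∈ s | j ≤ A x ∧ P x} := by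
  rw [← card_filter_add_card_filter_not (s := {x ∈ s | j ≤ A x ∧ P x}) (fun x => A x = j),
    filter_filter, filter_filter]
  congr 2 <;> exact filter_congr fun x _ => by grind

end TailDecomposition

/-- The null probability of an event `P` about the set of `Y`-ranks, for samples of sizes `m` (of
`X`) and `n` (of `Y`): the proportion of the `n`-element subsets of `{1,…,m+n}` that satisfy `P`. -/
noncomputable def nullProb (m n : ℕ) (P : Finset ℕ → Prop) [DecidablePred P] : ℝ :=
  #{S ∈ powersetCard n (Icc 1 (m + n)) | P S} / (m + n).choose n

section NullProb

lemma nullProb_joint_tail {m n i j : ℕ} (hm : 0 < m) (hn : 0 < n) (hi : i ≤ m) (hj : j ≤ n) :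
    nullProb m n (fun S => j ≤ Aexc m n 0 S ∧ i ≤ Bprec m n 0 S)
      = m.descFactorial i * n.descFactorial j / (m + n).descFactorial (i + j) := by
  have hchoose : ((m + n).choose n : ℝ) ≠ 0 := mod_cast (Nat.choose_pos (by omega)).ne'
  have hdesc : ((m + n).descFactorial (i + j) : ℝ) ≠ 0 :=
    mod_cast (Nat.descFactorial_pos.mpr (by omega)).ne'
  rw [nullProb, card_filter_joint_tail hm hn hi hj, div_eq_div_iff hchoose hdesc]
  exact mod_cast choose_sub_mul_descFactorial hi hj

lemma nullProb_V0_tail_eq_sum (m n z : ℕ) :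
    nullProb m n (fun S => z ≤ Aexc m n 0 S + Bprec m n 0 S)
      = ∑ j ∈ range z, nullProb m n (fun S => Aexc m n 0 S = j ∧ z - j ≤ Bprec m n 0 S)
        + nullProb m n (fun S => z ≤ Aexc m n 0 S) := by
  simp only [nullProb, card_filter_add_tail_eq_sum, Nat.cast_add, Nat.cast_sum, add_div, sum_div]

lemma nullProb_Aexc_eq_and_Bprec_tail (m n i j : ℕ) :
    nullProb m n (fun S => Aexc m n 0 S = j ∧ i ≤ Bprec m n 0 S)
      = nullProb m n (fun S => j ≤ Aexc m n 0 S ∧ i ≤ Bprec m n 0 S)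
        - nullProb m n (fun S => j + 1 ≤ Aexc m n 0 S ∧ i ≤ Bprec m n 0 S) := by
  simp only [nullProb, ← card_filter_eq_add_card_filter_succ_le _ (Aexc m n 0) _ j, Nat.cast_add,
    add_div, add_sub_cancel_right]

variable {ι : Type*} {l : Filter ι} {m n : ι → ℕ} {p : ℝ}

lemma tendsto_nullProb_joint_tail (hm : Tendsto m l atTop) (hn : Tendsto n l atTop)
    (hp : Tendsto (fun k => (m k : ℝ) / (m k + n k)) l (nhds p)) (i j : ℕ) :
    Tendsto (fun k => nullProb (m k) (n k)
        fun S => j ≤ Aexc (m k) (n k) 0 S ∧ i ≤ Bprec (m k) (n k) 0 S)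
      l (nhds (p ^ i * (1 - p) ^ j)) := by
  refine (tendsto_descFactorial_mul_div hm hn hp i j).congr' ?_
  filter_upwards [hm.eventually_gt_atTop 0, hn.eventually_gt_atTop 0, hm.eventually_ge_atTop i,
    hn.eventually_ge_atTop j] with k hm₀ hn₀ hi hj
  exact (nullProb_joint_tail hm₀ hn₀ hi hj).symm

lemma tendsto_nullProb_Aexc_eq_and_Bprec_tail (hm : Tendsto m l atTop) (hn : Tendsto n l atTop)
    (hp : Tendsto (fun k => (m k : ℝ) / (m k + n k)) l (nhds p)) (i j : ℕ) :
    Tendsto (fun k => nullProb (m k) (n k)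
        fun S => Aexc (m k) (n k) 0 S = j ∧ i ≤ Bprec (m k) (n k) 0 S)
      l (nhds (p ^ (i + 1) * (1 - p) ^ j)) := by
  have hlim : p ^ (i + 1) * (1 - p) ^ j = p ^ i * (1 - p) ^ j - p ^ i * (1 - p) ^ (j + 1) := by
    ring
  simp only [nullProb_Aexc_eq_and_Bprec_tail, hlim]
  exact (tendsto_nullProb_joint_tail hm hn hp i j).sub
    (tendsto_nullProb_joint_tail hm hn hp i (j + 1))

theorem sidak_V0_tail_limit_general (hm : Tendsto m l atTop) (hn : Tendsto n l atTop)
    (hp : Tendsto (fun k => (m k : ℝ) / (m k + n k)) l (nhds p)) (z : ℕ) :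
    Tendsto (fun k => nullProb (m k) (n k)
        fun S => z ≤ Aexc (m k) (n k) 0 S + Bprec (m k) (n k) 0 S)
      l (nhds (∑ j ∈ range z, p ^ (z - j + 1) * (1 - p) ^ j + (1 - p) ^ z)) := by
  simp only [nullProb_V0_tail_eq_sum]
  refine (tendsto_finsetSum _ fun j _ =>
    tendsto_nullProb_Aexc_eq_and_Bprec_tail hm hn hp (z - j) j).add ?_
  simpa only [Nat.zero_le, and_true, pow_zero, one_mul] using
    tendsto_nullProb_joint_tail hm hn hp 0 z

end NullProb

lemma sum_half_pow_add_half_pow (z : ℕ) :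
    ∑ j ∈ range z, (1 / 2 : ℝ) ^ (z - j + 1) * (1 - 1 / 2) ^ j + (1 - 1 / 2) ^ z
      = (z + 2) / 2 ^ (z + 1) := by
  have hterm : ∀ j ∈ range z,
      (1 / 2 : ℝ) ^ (z - j + 1) * (1 - 1 / 2) ^ j = (1 / 2) ^ (z + 1) := fun j hj => by
    have := mem_range.mp hj
    rw [sub_half, ← pow_add]
    congr 1
    omega
  rw [sum_congr rfl hterm, sum_const, card_range, nsmul_eq_mul, sub_half, one_div_pow, one_div_pow]
  field_simp
  ring

lemma tendsto_natCast_div_self_add_self :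
    Tendsto (fun n : ℕ => (n : ℝ) / (n + n)) atTop (nhds (1 / 2)) := by
  refine tendsto_const_nhds.congr' ?_
  filter_upwards [eventually_gt_atTop 0] with n hn
  field_simp
  norm_num

/-- Large-sample right-tail approximation for Šidák's statistic `V_0 = A_0 + B_0` with
equal sample sizes: the null probability that `V_0 ≥ z` converges to `(z+2)/2^{z+1}`. -/
theorem sidak_V0_tail_limit (z : ℕ) :
    Tendsto (fun n : ℕ =>
      ((((Finset.Icc 1 (n + n)).powersetCard n).filter
          (fun S => z ≤ Aexc n n 0 S + Bprec n n 0 S)).card : ℝ)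
        / ((n + n).choose n : ℝ))
      atTop (nhds ((z + 2 : ℝ) / 2 ^ (z + 1))) := by
  rw [← sum_half_pow_add_half_pow]
  exact sidak_V0_tail_limit_general tendsto_id tendsto_id tendsto_natCast_div_self_add_self z
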